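/- arXiv:2003.09102 — 2 statements merged into one kernel-verified Lean document; each statement's English description precedes it below -/
import Mathlib

section
/- There is an absolute constant K such that for every prime p ≥ 5 and every real X with p³ ≤ X, the number of pairs (A,B) ∈ E(X) with p ∣ 4A³+27B² (i.e. the elliptic curves y² = x³+Ax+B in the family with bad reduction at p) differs from ((p^{10}−p)/p^{11})·(p^{10}/(p^{10}−1))·(4/ζ(10))·X^{5/6} by at most K·p·X^{1/2}, where ζ is the Riemann zeta function. -/
/-- Condition (M): for every prime `q`, `q⁴ ∣ A` implies `q⁶ ∤ B`. -/
def CondM (A B : ℤ) : Prop := ∀ q : ℕ, q.Prime → (q : ℤ) ^ 4 ∣ A → ¬ (q : ℤ) ^ 6 ∣ B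

/-- The family `E(X)`: pairs `(A,B)` with `4A³+27B² ≠ 0`, naive height at most `X`,
satisfying condition (M). -/
def Efam (X : ℝ) : Set (ℤ × ℤ) :=
  {AB | 4 * AB.1 ^ 3 + 27 * AB.2 ^ 2 ≠ 0 ∧ ((max (|AB.1| ^ 3) (AB.2 ^ 2) : ℤ) : ℝ) ≤ X ∧
        CondM AB.1 AB.2}

open Finset

noncomputable def bx (w : ℝ) : Finset (ℤ × ℤ) :=
  Icc (-⌊w ^ 2⌋) ⌊w ^ 2⌋ ×ˢ Icc (-⌊w ^ 3⌋) ⌊w ^ 3⌋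

lemma mem_Icc_floor (y : ℝ) (x : ℤ) : x ∈ Icc (-⌊y⌋) ⌊y⌋ ↔ |(x : ℝ)| ≤ y := by
  rw [mem_Icc, ← abs_le, Int.le_floor]
  push_cast; rfl

lemma mem_bx (w : ℝ) (x : ℤ × ℤ) : x ∈ bx w ↔ |(x.1 : ℝ)| ≤ w ^ 2 ∧ |(x.2 : ℝ)| ≤ w ^ 3 := by
  rw [bx, mem_product, mem_Icc_floor, mem_Icc_floor]

lemma cnt (p : ℕ) (hp : 1 ≤ p) (y : ℝ) (hy : 0 ≤ y) (v : ℤ) :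
    |((#{x ∈ Icc (-⌊y⌋) ⌊y⌋ | x ≡ v [ZMOD p]} : ℕ) : ℝ) - 2 * y / p| ≤ 3 := by
  have h1 : Icc (-⌊y⌋) ⌊y⌋ = Ioc (-⌊y⌋ - 1) ⌊y⌋ := by
    ext x; simp only [mem_Icc, mem_Ioc]; omega
  have hp0 : (0 : ℤ) < p := by exact_mod_cast hp
  have hp1 : (1 : ℝ) ≤ p := by exact_mod_cast hp
  have hc := Int.Ioc_filter_modEq_card (-⌊y⌋ - 1) ⌊y⌋ hp0 v
  rw [h1]
  have hf : (0 : ℤ) ≤ ⌊y⌋ := Int.floor_nonneg.mpr hy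
  have hge : ⌊((-⌊y⌋ - 1 : ℤ) - v : ℚ) / ((p : ℤ) : ℚ)⌋ ≤ ⌊((⌊y⌋ : ℤ) - v : ℚ) / ((p : ℤ) : ℚ)⌋ := by
    apply Int.floor_le_floor
    gcongr
    omega
  rw [max_eq_left (by linarith)] at hc
  have hc' : ((#{x ∈ Ioc (-⌊y⌋ - 1) ⌊y⌋ | x ≡ v [ZMOD p]} : ℕ) : ℝ) =
    (⌊((⌊y⌋ : ℤ) - v : ℚ) / ((p : ℤ) : ℚ)⌋ : ℝ) - (⌊((-⌊y⌋ - 1 : ℤ) - v : ℚ) / ((p : ℤ) : ℚ)⌋ : ℝ) := by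
    exact_mod_cast hc
  rw [hc']
  have e1 : ⌊((⌊y⌋ : ℤ) - v : ℚ) / ((p : ℤ) : ℚ)⌋ = ⌊((⌊y⌋ : ℤ) - v : ℝ) / p⌋ := by
    rw [← Rat.floor_cast (α := ℝ)]; push_cast; rfl
  have e2 : ⌊((-⌊y⌋ - 1 : ℤ) - v : ℚ) / ((p : ℤ) : ℚ)⌋ = ⌊((-⌊y⌋ - 1 : ℤ) - v : ℝ) / p⌋ := by
    rw [← Rat.floor_cast (α := ℝ)]; push_cast; rfl
  rw [e1, e2]
  have a1 := Int.floor_le (((⌊y⌋ : ℤ) - v : ℝ) / p)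
  have a2 := Int.lt_floor_add_one (((⌊y⌋ : ℤ) - v : ℝ) / p)
  have b1 := Int.floor_le (((-⌊y⌋ - 1 : ℤ) - v : ℝ) / p)
  have b2 := Int.lt_floor_add_one (((-⌊y⌋ - 1 : ℤ) - v : ℝ) / p)
  have c1 := Int.floor_le y
  have c2 := Int.lt_floor_add_one y
  have e3 : ((⌊y⌋ : ℤ) - v : ℝ) / p - ((-⌊y⌋ - 1 : ℤ) - v : ℝ) / p - 2 * y / p
      = (2 * ⌊y⌋ + 1 - 2 * y) / p := by
    push_cast; field_simp; ring
  have e4 : |(2 * ⌊y⌋ + 1 - 2 * y) / p| ≤ 1 := by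
    rw [abs_div, div_le_one (by rw [abs_of_pos] <;> linarith)]
    rw [abs_of_pos (by linarith : (0:ℝ) < p)]
    refine le_trans (abs_le.mpr ⟨by linarith, by linarith⟩) hp1
  rw [abs_le] at e4 ⊢
  constructor <;> linarith [e4.1, e4.2]

lemma cntZ (p : ℕ) (hp : 1 ≤ p) (y : ℝ) (hy : 0 ≤ y) (v : ZMod p) :
    |((#{x ∈ (Icc (-⌊y⌋) ⌊y⌋ : Finset ℤ) | ((x : ℤ) : ZMod p) = v} : ℕ) : ℝ) - 2 * y / p| ≤ 3 := by
  obtain ⟨k, rfl⟩ := ZMod.intCast_surjective v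
  simp only [ZMod.intCast_eq_intCast_iff]
  exact cnt p hp y hy k

lemma prod_err (x y a b : ℝ) (hx : |x - a| ≤ 3) (hy : |y - b| ≤ 3) (ha : 0 ≤ a) (hb : 0 ≤ b) :
    |x * y - a * b| ≤ 3 * a + 3 * b + 9 := by
  have : x * y - a * b = (x - a) * (y - b) + a * (y - b) + (x - a) * b := by ring
  rw [this]
  refine (abs_add_three _ _ _).trans ?_
  rw [abs_mul, abs_mul, abs_mul, abs_of_nonneg ha, abs_of_nonneg hb]
  have := mul_le_mul hx hy (abs_nonneg _) (by norm_num)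
  nlinarith [abs_nonneg (x - a), abs_nonneg (y - b)]

/-- the fibre description -/
lemma fib {F : Type*} [Field F] (h2 : (2 : F) ≠ 0) (h3 : (3 : F) ≠ 0) (A B t : F) :
    (4 * A ^ 3 + 27 * B ^ 2 = 0 ∧ -3 * B / (2 * A) = t) ↔ (A = -3 * t ^ 2 ∧ B = 2 * t ^ 3) := by
  constructor
  · rintro ⟨h, rfl⟩
    by_cases hA : A = 0
    · subst hA
      have h27 : (27 : F) ≠ 0 := by
        have : (27 : F) = 3 ^ 3 := by norm_num
        rw [this]; exact pow_ne_zero _ h3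
      have : B = 0 := by
        have h' : 27 * B ^ 2 = 0 := by linear_combination h
        simpa [h27] using h'
      simp [this]
    · constructor
      · field_simp
        linear_combination h
      · field_simp
        linear_combination (B) * h
  · rintro ⟨rfl, rfl⟩
    refine ⟨by ring, ?_⟩
    by_cases ht : t = 0
    · simp [ht]
    · field_simp

lemma count_p (p : ℕ) (hp : p.Prime) (h5 : 5 ≤ p) (w : ℝ) (hw : 0 ≤ w) :
    |((#{x ∈ bx w | (p : ℤ) ∣ 4 * x.1 ^ 3 + 27 * x.2 ^ 2} : ℕ) : ℝ) - 4 * w ^ 5 / p|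
      ≤ 6 * w ^ 2 + 6 * w ^ 3 + 9 * p := by
  have : Fact p.Prime := ⟨hp⟩
  have h2 : (2 : ZMod p) ≠ 0 := by
    intro h
    have := (ZMod.natCast_eq_zero_iff 2 p).mp (by exact_mod_cast h)
    have := Nat.le_of_dvd (by norm_num) this
    omega
  have h3 : (3 : ZMod p) ≠ 0 := by
    intro h
    have := (ZMod.natCast_eq_zero_iff 3 p).mp (by exact_mod_cast h)
    have := Nat.le_of_dvd (by norm_num) this
    omega
  have hp0 : (0 : ℝ) < p := by exact_mod_cast hp.pos
  rw [card_eq_sum_card_fiberwise (f := fun x : ℤ × ℤ => (-3 * (x.2 : ZMod p) / (2 * (x.1 : ZMod p))))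
    (t := (univ : Finset (ZMod p))) (fun _ _ => by simp)]
  have key : ∀ t : ZMod p, #{x ∈ {x ∈ bx w | (p : ℤ) ∣ 4 * x.1 ^ 3 + 27 * x.2 ^ 2} |
      (-3 * (x.2 : ZMod p) / (2 * (x.1 : ZMod p))) = t} =
      #{x ∈ (Icc (-⌊w ^ 2⌋) ⌊w ^ 2⌋ : Finset ℤ) | ((x : ℤ) : ZMod p) = -3 * t ^ 2} *
      #{x ∈ (Icc (-⌊w ^ 3⌋) ⌊w ^ 3⌋ : Finset ℤ) | ((x : ℤ) : ZMod p) = 2 * t ^ 3} := by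
    intro t
    rw [← card_product]
    congr 1
    ext ⟨A, B⟩
    simp only [mem_filter, bx, mem_product]
    have := fib h2 h3 (A : ZMod p) (B : ZMod p) t
    have hd : ((p : ℤ) ∣ 4 * A ^ 3 + 27 * B ^ 2) ↔ 4 * (A : ZMod p) ^ 3 + 27 * (B : ZMod p) ^ 2 = 0 := by
      rw [← ZMod.intCast_zmod_eq_zero_iff_dvd]; push_cast; rfl
    rw [hd]
    tauto
  rw [sum_congr rfl (fun t _ => key t)]
  have e : 4 * w ^ 5 / p = ∑ t : ZMod p, (2 * w ^ 2 / p) * (2 * w ^ 3 / p) := by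
    rw [sum_const, card_univ, ZMod.card, nsmul_eq_mul]; field_simp; ring
  rw [e]
  push_cast
  rw [← sum_sub_distrib]
  refine (abs_sum_le_sum_abs _ _).trans ?_
  refine (sum_le_sum (fun t _ => prod_err _ _ _ _ (cntZ p hp.one_le _ (by positivity) _)
    (cntZ p hp.one_le _ (by positivity) _) (by positivity) (by positivity))).trans ?_
  rw [sum_const, card_univ, ZMod.card, nsmul_eq_mul]
  apply le_of_eq; field_simp; ring

lemma count_all (w : ℝ) (hw : 0 ≤ w) :
    |((#(bx w) : ℕ) : ℝ) - 4 * w ^ 5| ≤ 6 * w ^ 2 + 6 * w ^ 3 + 9 := by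
  rw [bx, card_product]
  have h1 := cnt 1 le_rfl (w ^ 2) (by positivity) 0
  have h2 := cnt 1 le_rfl (w ^ 3) (by positivity) 0
  simp only [Nat.cast_one, Int.modEq_one, filter_true, div_one] at h1 h2
  have := prod_err _ _ _ _ h1 h2 (by positivity) (by positivity)
  push_cast
  convert this using 2 <;> ring

lemma bx_small (w : ℝ) (hw : 0 ≤ w) (h1 : w < 1) (x : ℤ × ℤ) (hx : x ∈ bx w) : x = 0 := by
  rw [mem_bx] at hx
  have a : |(x.1 : ℝ)| < 1 := hx.1.trans_lt (pow_lt_one₀ hw h1 (by norm_num))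
  have b : |(x.2 : ℝ)| < 1 := hx.2.trans_lt (pow_lt_one₀ hw h1 (by norm_num))
  have a' : |x.1| < 1 := by exact_mod_cast a
  have b' : |x.2| < 1 := by exact_mod_cast b
  rw [Int.abs_lt_one_iff] at a' b'
  exact Prod.ext a' b'

lemma zero_mem_bx (w : ℝ) (hw : 0 ≤ w) : (0 : ℤ × ℤ) ∈ bx w := by
  rw [mem_bx]; simp; constructor <;> positivity

/-- uniform estimate, `(0,0)` removed -/
lemma unif_aux (P : ℤ × ℤ → Prop) [DecidablePred P] (h0 : P 0) (q c w : ℝ) (hq : 1 ≤ q) (hw : 0 ≤ w)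
    (hc0 : 0 ≤ c) (hc1 : c ≤ 1)
    (h : |((#{x ∈ bx w | P x} : ℕ) : ℝ) - 4 * w ^ 5 * c| ≤ 6 * w ^ 2 + 6 * w ^ 3 + 9 * q) :
    |((#{x ∈ bx w | P x ∧ x ≠ 0} : ℕ) : ℝ) - 4 * w ^ 5 * c| ≤ 22 * q * w ^ 3 := by
  rcases lt_or_ge w 1 with h1 | h1
  · have : ({x ∈ bx w | P x ∧ x ≠ 0} : Finset _) = ∅ := by
      rw [filter_eq_empty_iff]
      rintro x hx ⟨-, h⟩
      exact h (bx_small w hw h1 x hx)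
    rw [this]
    simp only [card_empty, Nat.cast_zero, zero_sub, abs_neg]
    rw [abs_of_nonneg (by positivity)]
    have h2 : w ^ 5 ≤ w ^ 3 := pow_le_pow_of_le_one hw h1.le (by norm_num)
    have h3 : w ^ 5 * c ≤ w ^ 3 * 1 := by gcongr
    have h4 : 1 * w ^ 3 ≤ q * w ^ 3 := by gcongr
    have : 0 ≤ w ^ 3 := by positivity
    nlinarith
  · have e : #{x ∈ bx w | P x} = #{x ∈ bx w | P x ∧ x ≠ 0} + 1 := by
      have : ({x ∈ bx w | P x ∧ x ≠ 0} : Finset _) = ({x ∈ bx w | P x} : Finset _).erase 0 := by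
        ext x; simp only [mem_filter, mem_erase]; tauto
      rw [this, card_erase_add_one]
      simp [zero_mem_bx w hw, h0]
    rw [e] at h
    push_cast at h
    have h2 : w ^ 2 ≤ w ^ 3 := pow_le_pow_right₀ h1 (by norm_num)
    have h3 : 1 ≤ w ^ 3 := one_le_pow₀ h1
    have h4 : 1 * w ^ 3 ≤ q * w ^ 3 := by gcongr
    have h5 : q * 1 ≤ q * w ^ 3 := by gcongr
    rw [abs_le] at h ⊢
    constructor <;> linarith [h.1, h.2]

lemma scale (p : ℕ) (hp : p.Prime) (d : ℕ) (hd : 1 ≤ d) (z : ℝ) :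
    #{x ∈ bx z | ((p : ℤ) ∣ 4 * x.1 ^ 3 + 27 * x.2 ^ 2 ∧ x ≠ 0) ∧ (d : ℤ) ^ 4 ∣ x.1 ∧ (d : ℤ) ^ 6 ∣ x.2}
     = #{x ∈ bx (z / d ^ 2) | (p ∣ d ∨ (p : ℤ) ∣ 4 * x.1 ^ 3 + 27 * x.2 ^ 2) ∧ x ≠ 0} := by
  have hd0 : (d : ℤ) ≠ 0 := by exact_mod_cast (by omega : d ≠ 0)
  have hd1 : (0 : ℝ) < d := by exact_mod_cast hd
  have hpp : Prime (p : ℤ) := Nat.prime_iff_prime_int.mp hp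
  symm
  have hinj : Function.Injective (fun x : ℤ × ℤ => ((d : ℤ) ^ 4 * x.1, (d : ℤ) ^ 6 * x.2)) := by
    rintro ⟨a, b⟩ ⟨a', b'⟩ h
    simp only [Prod.mk.injEq] at h ⊢
    exact ⟨mul_left_cancel₀ (pow_ne_zero _ hd0) h.1, mul_left_cancel₀ (pow_ne_zero _ hd0) h.2⟩
  rw [← card_image_of_injective _ hinj]
  congr 1
  have hmem : ∀ a b : ℤ, ((d : ℤ) ^ 4 * a, (d : ℤ) ^ 6 * b) ∈ bx z ↔ (a, b) ∈ bx (z / d ^ 2) := by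
    intro a b
    rw [mem_bx, mem_bx]
    push_cast
    rw [abs_mul, abs_mul, abs_of_pos (by positivity : (0 : ℝ) < d ^ 4),
      abs_of_pos (by positivity : (0 : ℝ) < d ^ 6), div_pow, div_pow, ← pow_mul, ← pow_mul,
      le_div_iff₀ (by positivity), le_div_iff₀ (by positivity), mul_comm, mul_comm (_ ^ 6)]
  have hdv : ∀ a b : ℤ, ((p : ℤ) ∣ 4 * ((d : ℤ) ^ 4 * a) ^ 3 + 27 * ((d : ℤ) ^ 6 * b) ^ 2) ↔
      (p ∣ d ∨ (p : ℤ) ∣ 4 * a ^ 3 + 27 * b ^ 2) := by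
    intro a b
    have : 4 * ((d : ℤ) ^ 4 * a) ^ 3 + 27 * ((d : ℤ) ^ 6 * b) ^ 2 =
      (d : ℤ) ^ 12 * (4 * a ^ 3 + 27 * b ^ 2) := by ring
    rw [this, hpp.dvd_mul, hpp.dvd_pow_iff_dvd (by norm_num), Int.natCast_dvd_natCast]
  have hz : ∀ a b : ℤ, ((d : ℤ) ^ 4 * a, (d : ℤ) ^ 6 * b) ≠ (0 : ℤ × ℤ) ↔ (a, b) ≠ (0 : ℤ × ℤ) := by
    intro a b
    have hdn : d ≠ 0 := by omega
    simp [hdn]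
  ext ⟨A, B⟩
  simp only [mem_image, mem_filter, Prod.exists]
  constructor
  · rintro ⟨a, b, ⟨h1, h2, h3⟩, h⟩
    rw [Prod.mk.injEq] at h
    obtain ⟨rfl, rfl⟩ := h
    exact ⟨(hmem a b).2 h1, ⟨(hdv a b).2 h2, (hz a b).2 h3⟩, dvd_mul_right _ _, dvd_mul_right _ _⟩
  · rintro ⟨h1, ⟨h2, h3⟩, ⟨a, rfl⟩, ⟨b, rfl⟩⟩
    exact ⟨a, b, ⟨(hmem a b).1 h1, (hdv a b).1 h2, (hz a b).1 h3⟩, rfl⟩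

lemma Nd_est (p : ℕ) (hp : p.Prime) (h5 : 5 ≤ p) (d : ℕ) (hd : 1 ≤ d) (z : ℝ) (hz : 0 ≤ z) :
    |((#{x ∈ bx z | ((p : ℤ) ∣ 4 * x.1 ^ 3 + 27 * x.2 ^ 2 ∧ x ≠ 0) ∧ (d : ℤ) ^ 4 ∣ x.1 ∧ (d : ℤ) ^ 6 ∣ x.2} : ℕ) : ℝ)
      - 4 * z ^ 5 * ((if p ∣ d then 1 else 1 / (p : ℝ)) / d ^ 10)| ≤ 22 * p * z ^ 3 * (1 / (d : ℝ) ^ 6) := by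
  rw [scale p hp d hd]
  have hp1 : (1 : ℝ) ≤ p := by exact_mod_cast hp.one_le
  have hw : 0 ≤ z / d ^ 2 := by positivity
  have e1 : 22 * p * z ^ 3 * (1 / (d : ℝ) ^ 6) = 22 * p * (z / d ^ 2) ^ 3 := by
    rw [div_pow, ← pow_mul]; ring
  have e2 : ∀ c : ℝ, 4 * z ^ 5 * (c / d ^ 10) = 4 * (z / d ^ 2) ^ 5 * c := by
    intro c
    rw [div_pow, ← pow_mul]; ring
  rw [e1, e2]
  refine unif_aux (fun x => p ∣ d ∨ (p : ℤ) ∣ 4 * x.1 ^ 3 + 27 * x.2 ^ 2) (by simp) p _ _ hp1 hw ?_ ?_ ?_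
  · split_ifs <;> positivity
  · split_ifs
    · rfl
    · rw [div_le_one] <;> linarith
  · by_cases h : p ∣ d
    · simp only [h, true_or, filter_true, if_true, mul_one]
      have := count_all _ hw
      linarith
    · simp only [h, false_or, if_false]
      have := count_p p hp h5 _ hw
      rwa [mul_one_div]

open ArithmeticFunction in
lemma moeb (A B : ℤ) (h : (A, B) ≠ (0 : ℤ × ℤ)) (N : ℕ)
    (hN : ∀ d : ℕ, (d : ℤ) ^ 4 ∣ A → (d : ℤ) ^ 6 ∣ B → d ≤ N) [Decidable (CondM A B)] :
    ∑ d ∈ Icc 1 N with (((d : ℕ) : ℤ) ^ 4 ∣ A ∧ (d : ℤ) ^ 6 ∣ B), moebius d = if CondM A B then 1 else 0 := by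
  set S : Finset ℕ := {d ∈ Icc 1 N | (((d : ℕ) : ℤ) ^ 4 ∣ A ∧ (d : ℤ) ^ 6 ∣ B)} with hS
  have mS : ∀ d, d ∈ S ↔ (d : ℤ) ^ 4 ∣ A ∧ (d : ℤ) ^ 6 ∣ B := by
    intro d
    simp only [hS, mem_filter, mem_Icc]
    constructor
    · exact fun h => h.2
    · intro hd
      refine ⟨⟨?_, hN d hd.1 hd.2⟩, hd⟩
      by_contra h0
      have : d = 0 := by omega
      subst this
      simp at hd
      exact h (by simp [hd.1, hd.2])
  have h1 : 1 ∈ S := by rw [mS]; simp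
  have hpos : ∀ d ∈ S, 1 ≤ d := fun d hd => (mem_Icc.mp (mem_filter.mp hd).1).1
  set n := S.max' ⟨1, h1⟩ with hn
  have hnS : n ∈ S := S.max'_mem _
  have hlcm : ∀ d ∈ S, d ∣ n := by
    intro d hd
    have hl : Nat.lcm d n ∈ S := by
      rw [mS] at hd hnS ⊢
      have conv : ∀ (k e : ℕ) (C : ℤ), (e : ℤ) ^ k ∣ C ↔ e ^ k ∣ C.natAbs := by
        intro k e C
        rw [← Int.natCast_dvd]; push_cast; rfl
      simp only [conv, ← Nat.pow_lcm_pow] at hd hnS ⊢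
      exact ⟨Nat.lcm_dvd hd.1 hnS.1, Nat.lcm_dvd hd.2 hnS.2⟩
    have h2 := S.le_max' _ hl
    have h3 : n ∣ Nat.lcm d n := Nat.dvd_lcm_right _ _
    have h4 : Nat.lcm d n = n := le_antisymm h2 (Nat.le_of_dvd (hpos _ hl) h3)
    rw [← h4]; exact Nat.dvd_lcm_left _ _
  have hdiv : S = n.divisors := by
    ext d
    rw [Nat.mem_divisors]
    constructor
    · intro hd
      exact ⟨hlcm d hd, by have := hpos n hnS; omega⟩
    · rintro ⟨hd, -⟩
      rw [mS] at hnS ⊢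
      have : (d : ℤ) ∣ n := by exact_mod_cast hd
      exact ⟨(pow_dvd_pow_of_dvd this 4).trans hnS.1, (pow_dvd_pow_of_dvd this 6).trans hnS.2⟩
  rw [hdiv]
  have hm := congrArg (fun f : ArithmeticFunction ℤ => f n) coe_zeta_mul_moebius
  simp only [coe_zeta_mul_apply, one_apply] at hm
  rw [hm]
  congr 1
  rw [eq_iff_iff]
  constructor
  · intro h1 q hq ha hb
    have := hlcm q ((mS q).2 ⟨ha, hb⟩)
    rw [h1] at this
    exact hq.one_lt.ne' (Nat.dvd_one.mp this)
  · intro hM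
    by_contra hne
    obtain ⟨q, hq, hqn⟩ := Nat.exists_prime_and_dvd hne
    have : q ∈ S := by rw [hdiv, Nat.mem_divisors]; exact ⟨hqn, by have := hpos n hnS; omega⟩
    rw [mS] at this
    exact hM q hq this.1 this.2

open ArithmeticFunction in
lemma mu_abs (n : ℕ) : |((moebius n : ℤ) : ℝ)| ≤ 1 := by
  exact_mod_cast (abs_moebius_le_one (n := n))

lemma summ (k : ℕ) (hk : 2 ≤ k) : Summable (fun n : ℕ => 1 / (n : ℝ) ^ k) :=
  Real.summable_one_div_nat_pow.mpr (by omega)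

open ArithmeticFunction in
lemma summ_mu (c : ℕ → ℝ) (hc : ∀ n, |c n| ≤ 1) :
    Summable (fun n : ℕ => ((moebius n : ℤ) : ℝ) * (c n / (n : ℝ) ^ 10)) := by
  refine Summable.of_norm_bounded (summ 10 (by norm_num)) (fun n => ?_)
  rw [Real.norm_eq_abs, abs_mul, abs_div, abs_of_nonneg (by positivity : (0 : ℝ) ≤ (n : ℝ) ^ 10)]
  have := mul_le_mul (mu_abs n) (div_le_div_of_nonneg_right (hc n) (by positivity : (0 : ℝ) ≤ (n : ℝ) ^ 10))
    (by positivity) (by norm_num)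
  simpa using this

open ArithmeticFunction in
lemma mu_zeta : (∑' n : ℕ, ((moebius n : ℤ) : ℝ) * (1 / (n : ℝ) ^ 10)) = 1 / (riemannZeta 10).re := by
  have h10 : 1 < (10 : ℂ).re := by norm_num
  have h := LSeries_zeta_mul_Lseries_moebius h10
  rw [LSeries_zeta_eq_riemannZeta h10] at h
  have hz : riemannZeta 10 = ((riemannZeta 10).re : ℂ) := by
    have := zeta_nat_eq_tsum_of_gt_one (k := 10) (by norm_num)
    have h' : riemannZeta 10 = ((∑' n : ℕ, 1 / (n : ℝ) ^ 10 : ℝ) : ℂ) := by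
      push_cast at this ⊢
      exact this
    rw [h', Complex.ofReal_re]
  have hm : LSeries (fun n => ((moebius n : ℤ) : ℂ)) 10 =
      ((∑' n : ℕ, ((moebius n : ℤ) : ℝ) * (1 / (n : ℝ) ^ 10) : ℝ) : ℂ) := by
    rw [LSeries, Complex.ofReal_tsum]
    congr 1
    ext n
    rw [LSeries.term_def]
    split_ifs with h0
    · simp [h0]
    · have : (n : ℂ) ^ (10 : ℂ) = (n : ℂ) ^ (10 : ℕ) := by
        rw [← Complex.cpow_natCast]; norm_num
      rw [this]; push_cast; ring
  rw [hm, hz] at h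
  have h' : (riemannZeta 10).re * (∑' n : ℕ, ((moebius n : ℤ) : ℝ) * (1 / (n : ℝ) ^ 10)) = 1 := by
    exact_mod_cast h
  exact eq_one_div_of_mul_eq_one_right h'

open ArithmeticFunction in
lemma main_const (p : ℕ) (hp : p.Prime) :
    (∑' n : ℕ, ((moebius n : ℤ) : ℝ) * ((if p ∣ n then 1 else 1 / (p : ℝ)) / (n : ℝ) ^ 10)) =
      (((p : ℝ) ^ 10 - p) / (p : ℝ) ^ 11) * ((p : ℝ) ^ 10 / ((p : ℝ) ^ 10 - 1))
            * (1 / (riemannZeta 10).re) := by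
  have hp1 : (1 : ℝ) < p := by exact_mod_cast hp.one_lt
  have hp0 : (p : ℝ) ≠ 0 := by linarith
  have hS := mu_zeta
  set Z := 1 / (riemannZeta 10).re with hZ
  set f : ℕ → ℝ := fun n => ((moebius n : ℤ) : ℝ) * ((if p ∣ n then 1 else 0) / (n : ℝ) ^ 10) with hf
  set g : ℕ → ℝ := fun n => ((moebius n : ℤ) : ℝ) * ((if p ∣ n then 0 else 1) / (n : ℝ) ^ 10) with hg
  have sf : Summable f := summ_mu _ (fun n => by split_ifs <;> simp)
  have sg : Summable g := summ_mu _ (fun n => by split_ifs <;> simp)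
  have e1 : (∑' n, f n) + ∑' n, g n = Z := by
    rw [← sf.tsum_add sg, ← hS]
    congr 1; ext n; simp only [hf, hg]; split_ifs <;> simp
  have e2 : (∑' n : ℕ, ((moebius n : ℤ) : ℝ) * ((if p ∣ n then 1 else 1 / (p : ℝ)) / (n : ℝ) ^ 10))
      = (∑' n, f n) + (1 / p) * ∑' n, g n := by
    rw [← tsum_mul_left, ← sf.tsum_add (sg.mul_left _)]
    congr 1; ext n; simp only [hf, hg]; split_ifs <;> simp; ring
  have e3 : (∑' n, f n) = - (1 / (p : ℝ) ^ 10) * ∑' n, g n := by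
    rw [← tsum_mul_left]
    have hinj : Function.Injective (fun m : ℕ => p * m) := fun a b h => Nat.eq_of_mul_eq_mul_left hp.pos h
    rw [← hinj.tsum_eq (f := f)]
    · congr 1; ext m
      simp only [hf, hg, dvd_mul_right, if_true]
      split_ifs with h
      · have : moebius (p * m) = 0 := by
          apply moebius_eq_zero_of_not_squarefree
          intro hs
          obtain ⟨k, rfl⟩ := h
          have := hs p ⟨k, by ring⟩
          exact hp.one_lt.ne' (Nat.isUnit_iff.mp this)
        simp [this]
      · have hc : Nat.Coprime p m := (Nat.Prime.coprime_iff_not_dvd hp).mpr h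
        rw [isMultiplicative_moebius.map_mul_of_coprime hc, moebius_apply_prime hp]
        push_cast
        rw [mul_pow]
        by_cases hm : m = 0
        · simp [hm]
        · field_simp
    · intro n hn
      by_contra h
      apply hn
      have : ¬ p ∣ n := fun ⟨k, hk⟩ => h ⟨k, hk.symm⟩
      simp [hf, this]
  rw [e2, e3]
  rw [e3] at e1
  have hne : (p : ℝ) ^ 10 - 1 ≠ 0 := by
    have : (1 : ℝ) < (p : ℝ) ^ 10 := one_lt_pow₀ hp1 (by norm_num)
    linarith
  rw [← e1]
  field_simp
  ring

open ArithmeticFunction Classical in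
lemma G0_est (p : ℕ) (hp : p.Prime) (h5 : 5 ≤ p) (z : ℝ) (hz : 0 ≤ z) :
    |((#{x ∈ bx z | ((p : ℤ) ∣ 4 * x.1 ^ 3 + 27 * x.2 ^ 2 ∧ x ≠ 0) ∧ CondM x.1 x.2} : ℕ) : ℝ)
      - 4 * z ^ 5 * ((((p : ℝ) ^ 10 - p) / (p : ℝ) ^ 11) * ((p : ℝ) ^ 10 / ((p : ℝ) ^ 10 - 1))
            * (1 / (riemannZeta 10).re))| ≤ 22 * p * z ^ 3 * ∑' d : ℕ, 1 / (d : ℝ) ^ 6 := by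
  set Nd : ℕ → ℕ := fun d => #{x ∈ bx z | ((p : ℤ) ∣ 4 * x.1 ^ 3 + 27 * x.2 ^ 2 ∧ x ≠ 0) ∧
    (d : ℤ) ^ 4 ∣ x.1 ∧ (d : ℤ) ^ 6 ∣ x.2} with hNd
  set N : ℕ := ⌊z ^ 2⌋₊ + ⌊z ^ 3⌋₊ with hNdef
  have hN : ∀ x ∈ bx z, x ≠ 0 → ∀ d : ℕ, (d : ℤ) ^ 4 ∣ x.1 → (d : ℤ) ^ 6 ∣ x.2 → d ≤ N := by
    intro x hx hx0 d h4 h6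
    rw [mem_bx] at hx
    have aux : ∀ (C : ℤ) (y : ℝ) (k : ℕ), k ≠ 0 → C ≠ 0 → |(C : ℝ)| ≤ y → (d : ℤ) ^ k ∣ C → d ≤ ⌊y⌋₊ := by
      intro C y k hk hC hy hd
      have h1 : (d : ℤ) ∣ C := (dvd_pow_self _ hk).trans hd
      have h2 : (d : ℤ) ≤ |C| := Int.le_of_dvd (abs_pos.mpr hC) ((dvd_abs _ _).mpr h1)
      apply Nat.le_floor
      refine le_trans ?_ hy
      exact_mod_cast h2
    by_cases hA : x.1 = 0
    · have hB : x.2 ≠ 0 := fun h => hx0 (Prod.ext hA h)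
      have := aux _ _ 6 (by norm_num) hB hx.2 h6
      omega
    · have := aux _ _ 4 (by norm_num) hA hx.1 h4
      omega
  have hz0 : ∀ d ∉ Icc 1 N, ((moebius d : ℤ) : ℝ) * (Nd d : ℝ) = 0 := by
    intro d hd
    rw [mem_Icc] at hd
    by_cases h0 : d = 0
    · simp [h0]
    · have : Nd d = 0 := by
        simp only [hNd, card_eq_zero, filter_eq_empty_iff]
        rintro x hx ⟨⟨-, hx0⟩, h4, h6⟩
        have := hN x hx hx0 d h4 h6
        omega
      simp [this]
  have hG : ((#{x ∈ bx z | ((p : ℤ) ∣ 4 * x.1 ^ 3 + 27 * x.2 ^ 2 ∧ x ≠ 0) ∧ CondM x.1 x.2} : ℕ) : ℝ)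
      = ∑' d : ℕ, ((moebius d : ℤ) : ℝ) * (Nd d : ℝ) := by
    rw [tsum_eq_sum hz0]
    have hi : ((#{x ∈ bx z | ((p : ℤ) ∣ 4 * x.1 ^ 3 + 27 * x.2 ^ 2 ∧ x ≠ 0) ∧ CondM x.1 x.2} : ℕ) : ℤ)
      = ∑ d ∈ Icc 1 N, moebius d * (Nd d : ℤ) := by
      rw [← filter_filter, card_filter]
      push_cast
      have : ∀ x ∈ ({x ∈ bx z | ((p : ℤ) ∣ 4 * x.1 ^ 3 + 27 * x.2 ^ 2 ∧ x ≠ 0)} : Finset (ℤ × ℤ)),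
          (if CondM x.1 x.2 then (1 : ℤ) else 0) =
          ∑ d ∈ Icc 1 N, if (((d : ℕ) : ℤ) ^ 4 ∣ x.1 ∧ (d : ℤ) ^ 6 ∣ x.2) then moebius d else 0 := by
        intro x hx
        rw [mem_filter] at hx
        rw [← sum_filter]
        exact (moeb x.1 x.2 hx.2.2 N (hN x hx.1 hx.2.2)).symm
      rw [sum_congr rfl this, sum_comm]
      refine sum_congr rfl (fun d _ => ?_)
      rw [← sum_filter, sum_const, filter_filter, nsmul_eq_mul, mul_comm]
    exact_mod_cast hi
  rw [hG, ← main_const p hp, ← tsum_mul_left]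
  have hp1 : (1 : ℝ) ≤ p := by exact_mod_cast hp.one_le
  have s1 : Summable (fun d : ℕ => ((moebius d : ℤ) : ℝ) * (Nd d : ℝ)) := summable_of_ne_finset_zero hz0
  have s2 : Summable (fun n : ℕ => ((moebius n : ℤ) : ℝ) * ((if p ∣ n then 1 else 1 / (p : ℝ)) / (n : ℝ) ^ 10)) := by
    refine summ_mu _ (fun n => ?_)
    split_ifs
    · simp
    · rw [abs_of_nonneg (by positivity), div_le_one] <;> linarith
  rw [← s1.tsum_sub (s2.mul_left _), ← tsum_mul_left, ← Real.norm_eq_abs]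
  refine tsum_of_norm_bounded ((summ 6 (by norm_num)).mul_left _).hasSum (fun d => ?_)
  by_cases h0 : d = 0
  · simp [h0]
  · have h := Nd_est p hp h5 d (by omega) z hz
    have e : ((moebius d : ℤ) : ℝ) * (Nd d : ℝ) - 4 * z ^ 5 * (((moebius d : ℤ) : ℝ) *
      ((if p ∣ d then 1 else 1 / (p : ℝ)) / (d : ℝ) ^ 10)) =
      ((moebius d : ℤ) : ℝ) * ((Nd d : ℝ) - 4 * z ^ 5 * ((if p ∣ d then 1 else 1 / (p : ℝ)) / (d : ℝ) ^ 10)) := by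
      ring
    rw [e, Real.norm_eq_abs, abs_mul]
    have := mul_le_mul (mu_abs d) h (abs_nonneg _) (by norm_num)
    rwa [one_mul] at this

/-- pairs with vanishing discriminant -/
lemma disc0 (z : ℝ) (hz : 0 ≤ z) :
    ((#{x ∈ bx z | 4 * x.1 ^ 3 + 27 * x.2 ^ 2 = 0} : ℕ) : ℝ) ≤ 2 * z ^ 3 + 3 := by
  have h1 : #{x ∈ bx z | 4 * x.1 ^ 3 + 27 * x.2 ^ 2 = 0} ≤ #(Icc (-⌊z ^ 3⌋) ⌊z ^ 3⌋) := by
    apply card_le_card_of_injOn (fun x => x.2)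
    · intro x hx
      have hx := mem_coe.mp hx
      exact (mem_product.mp (mem_filter.mp hx).1).2
    · intro x hx y hy h
      have hx := (mem_filter.mp (mem_coe.mp hx)).2
      have hy := (mem_filter.mp (mem_coe.mp hy)).2
      simp only at h
      rw [h] at hx
      have h3 : x.1 ^ 3 = y.1 ^ 3 := by linarith
      have h1 : x.1 = y.1 := (Odd.strictMono_pow (by decide : Odd 3)).injective h3
      exact Prod.ext h1 h
  have h2 := cnt 1 le_rfl (z ^ 3) (by positivity) 0
  simp only [Nat.cast_one, Int.modEq_one, filter_true, div_one] at h2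
  have h3 : ((#{x ∈ bx z | 4 * x.1 ^ 3 + 27 * x.2 ^ 2 = 0} : ℕ) : ℝ) ≤ (#(Icc (-⌊z ^ 3⌋) ⌊z ^ 3⌋) : ℕ) := by
    exact_mod_cast h1
  linarith [(abs_le.mp h2).2]

lemma height_iff (z : ℝ) (hz : 0 ≤ z) (x : ℤ × ℤ) :
    ((max (|x.1| ^ 3) (x.2 ^ 2) : ℤ) : ℝ) ≤ z ^ 6 ↔ x ∈ bx z := by
  rw [mem_bx, Int.cast_max, max_le_iff]
  push_cast
  have e1 : z ^ 6 = (z ^ 2) ^ 3 := by ring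
  have e2 : z ^ 6 = (z ^ 3) ^ 2 := by ring
  refine and_congr ?_ ?_
  · rw [e1, pow_le_pow_iff_left₀ (abs_nonneg _) (by positivity) (by norm_num)]
  · rw [e2, ← sq_abs, pow_le_pow_iff_left₀ (abs_nonneg _) (by positivity) (by norm_num)]

theorem stmt_13 :
    ∃ K : ℝ, 0 < K ∧ ∀ (p : ℕ), p.Prime → 5 ≤ p → ∀ (X : ℝ), (p : ℝ) ^ 3 ≤ X →
      |({AB ∈ Efam X | (p : ℤ) ∣ (4 * AB.1 ^ 3 + 27 * AB.2 ^ 2)}.ncard : ℝ)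
          - (((p : ℝ) ^ 10 - p) / (p : ℝ) ^ 11) * ((p : ℝ) ^ 10 / ((p : ℝ) ^ 10 - 1))
            * (4 / (riemannZeta 10).re) * X ^ ((5 : ℝ) / 6)|
        ≤ K * (p : ℝ) * X ^ ((1 : ℝ) / 2) := by
  classical
  have hT : 0 ≤ ∑' d : ℕ, 1 / (d : ℝ) ^ 6 := tsum_nonneg (fun d => by positivity)
  refine ⟨22 * (∑' d : ℕ, 1 / (d : ℝ) ^ 6) + 5, by positivity, ?_⟩
  intro p hp h5 X hX
  have hp1 : (1 : ℝ) ≤ p := by exact_mod_cast hp.one_le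
  have hX1 : 1 ≤ X := le_trans (one_le_pow₀ hp1) hX
  have hX0 : 0 ≤ X := by linarith
  set z : ℝ := X ^ ((1 : ℝ) / 6) with hzdef
  have hz1 : 1 ≤ z := Real.one_le_rpow hX1 (by norm_num)
  have hz : 0 ≤ z := by linarith
  have zp : ∀ k : ℕ, z ^ k = X ^ ((k : ℝ) / 6) := by
    intro k
    rw [hzdef, ← Real.rpow_natCast, ← Real.rpow_mul hX0]
    congr 1; ring
  have e6 : X = z ^ 6 := by rw [zp]; norm_num
  have e5 : X ^ ((5 : ℝ) / 6) = z ^ 5 := by rw [zp]; norm_num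
  have e3 : X ^ ((1 : ℝ) / 2) = z ^ 3 := by rw [zp]; norm_num
  rw [e5, e3]
  have hG := G0_est p hp h5 z hz
  have hD := disc0 z hz
  set G : Finset (ℤ × ℤ) :=
    {x ∈ bx z | ((p : ℤ) ∣ 4 * x.1 ^ 3 + 27 * x.2 ^ 2 ∧ x ≠ 0) ∧ CondM x.1 x.2} with hGdef
  have hset : {AB ∈ Efam X | (p : ℤ) ∣ (4 * AB.1 ^ 3 + 27 * AB.2 ^ 2)} =
      ((G.filter (fun x => ¬ (4 * x.1 ^ 3 + 27 * x.2 ^ 2 = 0)) : Finset (ℤ × ℤ)) : Set (ℤ × ℤ)) := by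
    ext x
    have hh := height_iff z hz x
    rw [← e6] at hh
    simp only [Efam, Set.mem_ofPred_eq, hh, hGdef, coe_filter, mem_filter]
    constructor
    · rintro ⟨⟨h1, h2, h3⟩, h4⟩
      refine ⟨⟨h2, ⟨h4, ?_⟩, h3⟩, h1⟩
      rintro rfl
      exact h1 (by simp)
    · rintro ⟨⟨h2, ⟨h4, -⟩, h3⟩, h1⟩
      exact ⟨⟨h1, h2, h3⟩, h4⟩
  rw [hset, Set.ncard_coe_finset]
  have hsplit := card_filter_add_card_filter_not (s := G) (fun x => 4 * x.1 ^ 3 + 27 * x.2 ^ 2 = 0)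
  have hle : #(G.filter (fun x => 4 * x.1 ^ 3 + 27 * x.2 ^ 2 = 0)) ≤
      #{x ∈ bx z | 4 * x.1 ^ 3 + 27 * x.2 ^ 2 = 0} :=
    card_le_card (filter_subset_filter _ (filter_subset _ _))
  have hle' : ((#(G.filter (fun x => 4 * x.1 ^ 3 + 27 * x.2 ^ 2 = 0)) : ℕ) : ℝ) ≤ 2 * z ^ 3 + 3 :=
    le_trans (by exact_mod_cast hle) hD
  have hsplit' : ((#(G.filter (fun x => 4 * x.1 ^ 3 + 27 * x.2 ^ 2 = 0)) : ℕ) : ℝ) +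
      ((#(G.filter (fun x => ¬ (4 * x.1 ^ 3 + 27 * x.2 ^ 2 = 0))) : ℕ) : ℝ) = ((#G : ℕ) : ℝ) := by
    exact_mod_cast hsplit
  have hnn : (0 : ℝ) ≤ ((#(G.filter (fun x => 4 * x.1 ^ 3 + 27 * x.2 ^ 2 = 0)) : ℕ) : ℝ) := Nat.cast_nonneg _
  have h3 : 1 ≤ z ^ 3 := one_le_pow₀ hz1
  have h4 : 1 * z ^ 3 ≤ p * z ^ 3 := by gcongr
  have em : (((p : ℝ) ^ 10 - p) / (p : ℝ) ^ 11) * ((p : ℝ) ^ 10 / ((p : ℝ) ^ 10 - 1))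
            * (4 / (riemannZeta 10).re) * z ^ 5 =
      4 * z ^ 5 * ((((p : ℝ) ^ 10 - p) / (p : ℝ) ^ 11) * ((p : ℝ) ^ 10 / ((p : ℝ) ^ 10 - 1))
            * (1 / (riemannZeta 10).re)) := by ring
  rw [em]
  have ek : (22 * (∑' d : ℕ, 1 / (d : ℝ) ^ 6) + 5) * (p : ℝ) * z ^ 3 =
    22 * p * z ^ 3 * (∑' d : ℕ, 1 / (d : ℝ) ^ 6) + 5 * (p * z ^ 3) := by ring
  rw [ek]
  rw [abs_le] at hG ⊢
  constructor <;> linarith [hG.1, hG.2]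
end

section
/- There is an absolute constant K such that for every prime p ≥ 5 and every real X with p³ ≤ X, the number of pairs (A,B) ∈ E(X) with p ∣ 4A³+27B², p ∤ A, and −18AB a nonzero square modulo p (i.e. the elliptic curves y² = x³+Ax+B in the family with split multiplicative reduction at p) differs from ((p−1)/(2p²))·(p^{10}/(p^{10}−1))·(4/ζ(10))·X^{5/6} by at most K·X^{1/2}, where ζ is the Riemann zeta function. -/
/-- The local condition at `p`. -/
def Gc (p : ℕ) (A B : ℤ) : Prop :=
  (p : ℤ) ∣ (4 * A ^ 3 + 27 * B ^ 2) ∧ ¬ (p : ℤ) ∣ A ∧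
            ((-18 * A * B : ℤ) : ZMod p) ≠ 0 ∧ IsSquare ((-18 * A * B : ℤ) : ZMod p)

lemma zmod_ne (p : ℕ) (hp : p.Prime) (h5 : 5 ≤ p) : (2 : ZMod p) ≠ 0 ∧ (3 : ZMod p) ≠ 0 := by
  constructor
  · have : ((2:ℕ) : ZMod p) ≠ 0 := by
      rw [Ne, ZMod.natCast_eq_zero_iff]
      intro h; have := Nat.le_of_dvd (by norm_num) h; omega
    simpa using this
  · have : ((3:ℕ) : ZMod p) ≠ 0 := by
      rw [Ne, ZMod.natCast_eq_zero_iff]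
      intro h; have := Nat.le_of_dvd (by norm_num) h; omega
    simpa using this

lemma Gc_iff (p : ℕ) (hp : p.Prime) (h5 : 5 ≤ p) (A B : ℤ) :
    Gc p A B ↔ ∃ t : ZMod p, t ≠ 0 ∧ IsSquare (3 * t) ∧ (A : ZMod p) = -3 * t ^ 2 ∧
      (B : ZMod p) = 2 * t ^ 3 := by
  have := Fact.mk hp
  obtain ⟨h2, h3⟩ := zmod_ne p hp h5
  unfold Gc
  rw [← ZMod.intCast_zmod_eq_zero_iff_dvd, ← ZMod.intCast_zmod_eq_zero_iff_dvd]
  push_cast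
  generalize (A : ZMod p) = a
  generalize (B : ZMod p) = b
  constructor
  · rintro ⟨h, ha, hb, hs⟩
    have hb0 : b ≠ 0 := by rintro rfl; simp at hb
    have e1 : 4 * a ^ 3 = - 27 * b ^ 2 := by linear_combination h
    refine ⟨-3 * b / (2 * a), ?_, ?_, ?_, ?_⟩
    · simp [h2, h3, ha, hb0]
    · obtain ⟨s, hs⟩ := hs
      refine ⟨s / (2 * a), ?_⟩
      field_simp
      linear_combination hs
    · field_simp
      linear_combination e1
    · field_simp
      linear_combination e1
  · rintro ⟨t, ht, ⟨s, hs⟩, rfl, rfl⟩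
    refine ⟨by ring, by simp [h3, ht], ?_, ?_⟩
    · have : -18 * (-3 * t ^ 2) * (2 * t ^ 3) = 2 ^ 2 * 3 ^ 3 * t ^ 5 := by ring
      rw [this]; simp [h2, h3, ht]
    · exact ⟨6 * t ^ 2 * s, by linear_combination 36 * t ^ 4 * hs⟩

lemma Gc_scale (p : ℕ) (hp : p.Prime) (h5 : 5 ≤ p) (d : ℕ) (hd : ¬ p ∣ d) (A B : ℤ) :
    Gc p ((d:ℤ) ^ 4 * A) ((d:ℤ) ^ 6 * B) ↔ Gc p A B := by
  have := Fact.mk hp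
  rw [Gc_iff p hp h5, Gc_iff p hp h5]
  have hd0 : (d : ZMod p) ≠ 0 := by rwa [Ne, ZMod.natCast_eq_zero_iff]
  push_cast
  generalize (A : ZMod p) = a
  generalize (B : ZMod p) = b
  generalize (d : ZMod p) = d at *
  constructor
  · rintro ⟨t, ht, ⟨s, hs⟩, h1, h2⟩
    refine ⟨t / d ^ 2, by simp [ht, hd0], ⟨s / d, ?_⟩, ?_, ?_⟩
    · field_simp; linear_combination hs
    · field_simp; linear_combination h1
    · field_simp; linear_combination h2
  · rintro ⟨t, ht, ⟨s, hs⟩, rfl, rfl⟩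
    exact ⟨d ^ 2 * t, by simp [ht, hd0], ⟨s * d, by linear_combination d ^ 2 * hs⟩, by ring, by ring⟩

open Classical in
lemma card_T (p : ℕ) (hp : p.Prime) (h5 : 5 ≤ p) [NeZero p] :
    ((Finset.univ.filter (fun t : ZMod p => t ≠ 0 ∧ IsSquare (3 * t))).card : ℝ) = ((p:ℝ) - 1) / 2 := by
  have := Fact.mk hp
  obtain ⟨h2, h3⟩ := zmod_ne p hp h5
  have hc : ringChar (ZMod p) ≠ 2 := by rw [ZMod.ringChar_zmod_n]; omega
  have h := quadraticChar_sum_zero hc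
  have h' : ∑ t : ZMod p, quadraticChar (ZMod p) (3 * t) = 0 := by
    rw [← h]
    exact Fintype.sum_equiv (Equiv.mulLeft₀ 3 h3) _ _ (fun _ => rfl)
  have key : ∀ t : ZMod p, quadraticChar (ZMod p) (3 * t) =
      2 * (if t ≠ 0 ∧ IsSquare (3 * t) then 1 else 0) - 1 + (if t = 0 then 1 else 0) := by
    intro t
    by_cases ht : t = 0
    · simp [ht]
    · have h30 : 3 * t ≠ 0 := mul_ne_zero h3 ht
      by_cases hs : IsSquare (3 * t)
      · rw [(quadraticChar_one_iff_isSquare h30).2 hs]; simp [ht, hs]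
      · rw [quadraticChar_neg_one_iff_not_isSquare.2 hs]; simp [ht, hs]
  simp_rw [key, Finset.sum_add_distrib, Finset.sum_sub_distrib, ← Finset.mul_sum] at h'
  rw [Finset.sum_boole] at h'
  simp [ZMod.card] at h'
  have h'' : (2:ℝ) * ((Finset.univ.filter (fun t : ZMod p => t ≠ 0 ∧ IsSquare (3 * t))).card : ℝ) - p + 1 = 0 := by
    simp
    exact_mod_cast h'
  linarith

lemma res_count (p : ℕ) (hp : 0 < p) (u : ℝ) (hu : 0 ≤ u) (r : ZMod p) :
    |(((Finset.Icc (-⌊u⌋) ⌊u⌋).filter (fun a : ℤ => (a : ZMod p) = r)).card : ℝ) - 2 * u / p| ≤ 2 := by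
  have : NeZero p := ⟨hp.ne'⟩
  have e : (Finset.Icc (-⌊u⌋) ⌊u⌋).filter (fun a : ℤ => (a : ZMod p) = r) =
     (Finset.Ioc (-⌊u⌋-1) ⌊u⌋).filter (fun a : ℤ => a ≡ (r.val : ℤ) [ZMOD p]) := by
    ext a
    simp only [Finset.mem_filter, Finset.mem_Icc, Finset.mem_Ioc]
    rw [← ZMod.intCast_eq_intCast_iff]
    simp only [Int.cast_natCast, ZMod.natCast_val, ZMod.cast_id', id_eq]
    constructor <;> rintro ⟨⟨h1, h2⟩, h3⟩ <;> refine ⟨⟨by omega, by omega⟩, ?_⟩ <;> simpa using h3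
  have hpR : (0:ℝ) < p := by exact_mod_cast hp
  have h := Int.Ioc_filter_modEq_card (-⌊u⌋-1) ⌊u⌋ (r := p) (by exact_mod_cast hp) (r.val : ℤ)
  rw [e]
  have hf0 : (0:ℤ) ≤ ⌊u⌋ := Int.floor_nonneg.2 hu
  set x : ℚ := (⌊u⌋ - ((r.val:ℤ):ℚ)) / ((p:ℤ):ℚ) with hx
  set y : ℚ := ((-⌊u⌋-1 : ℤ) - ((r.val:ℤ):ℚ)) / ((p:ℤ):ℚ) with hy
  have hpQ : (0:ℚ) < p := by exact_mod_cast hp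
  have hxy : y ≤ x := by
    rw [hx, hy]; gcongr; exact_mod_cast (by omega : -⌊u⌋-1 ≤ ⌊u⌋)
  have hfl : ⌊y⌋ ≤ ⌊x⌋ := Int.floor_mono hxy
  rw [max_eq_left (by omega)] at h
  have h2 : ((((Finset.Ioc (-⌊u⌋-1) ⌊u⌋).filter (fun a : ℤ => a ≡ (r.val : ℤ) [ZMOD p])).card : ℤ) : ℚ) = ⌊x⌋ - ⌊y⌋ := by
    rw [h]; push_cast; rfl
  have hxyd : x - y = (2 * ⌊u⌋ + 1) / p := by rw [hx, hy]; push_cast; field_simp; ring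
  have b1 := Int.floor_le x
  have b2 := Int.lt_floor_add_one x
  have b3 := Int.floor_le y
  have b4 := Int.lt_floor_add_one y
  generalize ((Finset.Ioc (-⌊u⌋-1) ⌊u⌋).filter (fun a : ℤ => a ≡ (r.val : ℤ) [ZMOD p])).card = c at *
  have k1 : (c:ℚ) ≤ (2 * ⌊u⌋ + 1) / p + 1 := by
    have : (c:ℚ) = ⌊x⌋ - ⌊y⌋ := by exact_mod_cast h2
    linarith
  have k2 : (2 * ⌊u⌋ + 1) / p - 1 ≤ (c:ℚ) := by
    have : (c:ℚ) = ⌊x⌋ - ⌊y⌋ := by exact_mod_cast h2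
    linarith
  have k1' : (c:ℝ) ≤ (2 * ⌊u⌋ + 1) / p + 1 := by exact_mod_cast k1
  have k2' : (2 * ⌊u⌋ + 1) / p - 1 ≤ (c:ℝ) := by exact_mod_cast k2
  have f1 := Int.floor_le u
  have f2 := Int.lt_floor_add_one u
  have hp1 : (1:ℝ) ≤ p := by exact_mod_cast hp
  have hdiv : (1:ℝ) / p ≤ 1 := by rw [div_le_one hpR]; exact hp1
  have g1 : (2 * (⌊u⌋:ℝ) + 1) / p ≤ 2 * u / p + 1 / p := by
    rw [← add_div]; gcongr
  have g2 : 2 * u / p - 1 / p ≤ (2 * (⌊u⌋:ℝ) + 1) / p := by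
    rw [← sub_div]; gcongr; linarith
  rw [abs_le]; constructor <;> linarith

open Classical in
/-- Pairs in the box of scale `y` with the local condition at `p`. -/
noncomputable def boxF (p : ℕ) (y : ℝ) : Finset (ℤ × ℤ) :=
  ((Finset.Icc (-⌊y ^ 4⌋) ⌊y ^ 4⌋) ×ˢ (Finset.Icc (-⌊y ^ 6⌋) ⌊y ^ 6⌋)).filter
    (fun AB => Gc p AB.1 AB.2)

lemma mem_boxF (p : ℕ) (y : ℝ) (A B : ℤ) :
    (A, B) ∈ boxF p y ↔ |(A:ℝ)| ≤ y ^ 4 ∧ |(B:ℝ)| ≤ y ^ 6 ∧ Gc p A B := by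
  unfold boxF
  simp only [Finset.mem_filter, Finset.mem_product, Finset.mem_Icc, abs_le, neg_le (a := ⌊_⌋),
    Int.le_floor]
  push_cast
  simp only [neg_le (b := (_:ℝ)) (a := (A:ℝ)), neg_le (b := (_:ℝ)) (a := (B:ℝ))]
  constructor
  · rintro ⟨⟨⟨h1, h2⟩, h3, h4⟩, h5⟩
    exact ⟨⟨by linarith, h2⟩, ⟨by linarith, h4⟩, h5⟩
  · rintro ⟨⟨h1, h2⟩, ⟨h3, h4⟩, h5⟩
    exact ⟨⟨⟨by linarith, h2⟩, by linarith, h4⟩, h5⟩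

lemma boxF_empty (p : ℕ) (y : ℝ) (hy0 : 0 ≤ y) (hy : y < 1) : boxF p y = ∅ := by
  rw [Finset.eq_empty_iff_forall_notMem]
  rintro ⟨A, B⟩ h
  rw [mem_boxF] at h
  obtain ⟨h1, -, h2⟩ := h
  have : |(A:ℝ)| < 1 := h1.trans_lt (pow_lt_one₀ hy0 hy (by norm_num))
  have hA : A = 0 := by
    have : |A| < 1 := by exact_mod_cast this
    exact Int.abs_lt_one_iff.1 this
  exact h2.2.1 (hA ▸ dvd_zero _)

open Classical in
lemma card_boxF (p : ℕ) (hp : p.Prime) (h5 : 5 ≤ p) (y : ℝ) (hy : 0 ≤ y) :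
    |((boxF p y).card : ℝ) - (((p : ℝ) - 1) / (2 * (p : ℝ) ^ 2)) * 4 * y ^ 10| ≤
      2 * y ^ 6 + 2 * y ^ 4 + 2 * p := by
  have := Fact.mk hp
  have : NeZero p := ⟨hp.ne_zero⟩
  obtain ⟨h2, h3⟩ := zmod_ne p hp h5
  set T := Finset.univ.filter (fun t : ZMod p => t ≠ 0 ∧ IsSquare (3 * t)) with hT
  set fa : ZMod p → Finset ℤ := fun r => (Finset.Icc (-⌊y ^ 4⌋) ⌊y ^ 4⌋).filter (fun a : ℤ => (a : ZMod p) = r)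
    with hfa
  set fb : ZMod p → Finset ℤ := fun r => (Finset.Icc (-⌊y ^ 6⌋) ⌊y ^ 6⌋).filter (fun a : ℤ => (a : ZMod p) = r)
    with hfb
  have e : boxF p y = T.biUnion (fun t => fa (-3 * t ^ 2) ×ˢ fb (2 * t ^ 3)) := by
    ext ⟨A, B⟩
    unfold boxF
    simp only [Finset.mem_filter, Finset.mem_product, Finset.mem_biUnion, Gc_iff p hp h5, hT, hfa, hfb,
      Finset.mem_univ, true_and]
    constructor
    · rintro ⟨⟨h1, h2⟩, t, a, b, c, d⟩
      exact ⟨t, ⟨a, b⟩, ⟨h1, c⟩, h2, d⟩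
    · rintro ⟨t, ⟨a, b⟩, ⟨h1, c⟩, h2, d⟩
      exact ⟨⟨h1, h2⟩, t, a, b, c, d⟩
  have hcard : (boxF p y).card = ∑ t ∈ T, (fa (-3 * t ^ 2)).card * (fb (2 * t ^ 3)).card := by
    rw [e, Finset.card_biUnion]
    · simp only [Finset.card_product]
    · intro s hs t ht hst
      change Disjoint (fa (-3 * s ^ 2) ×ˢ fb (2 * s ^ 3)) (fa (-3 * t ^ 2) ×ˢ fb (2 * t ^ 3))
      rw [Finset.disjoint_left]
      rintro ⟨A, B⟩ hA hB
      simp only [Finset.mem_filter, Finset.mem_product, hfa, hfb] at hA hB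
      simp only [hT, Finset.mem_coe, Finset.mem_filter, Finset.mem_univ, true_and] at hs ht
      have e1 := hA.1.2.symm.trans hB.1.2
      have e2 := hA.2.2.symm.trans hB.2.2
      have e1' : s ^ 2 = t ^ 2 := by
        apply mul_left_cancel₀ (neg_ne_zero.2 h3) e1
      have e2' : s ^ 3 = t ^ 3 := mul_left_cancel₀ h2 e2
      apply hst
      apply mul_left_cancel₀ (pow_ne_zero 2 hs.1)
      calc s ^ 2 * s = s ^ 3 := by ring
        _ = t ^ 2 * t := by rw [e2']; ring
        _ = s ^ 2 * t := by rw [e1']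
  have hTc : (T.card : ℝ) = ((p:ℝ) - 1) / 2 := card_T p hp h5
  have hp0 : (0:ℝ) < p := by exact_mod_cast hp.pos
  have hm : (((p : ℝ) - 1) / (2 * (p : ℝ) ^ 2)) * 4 * y ^ 10 = ∑ t ∈ T, (2 * y ^ 4 / p) * (2 * y ^ 6 / p) := by
    rw [Finset.sum_const, nsmul_eq_mul, hTc]
    field_simp
    ring
  rw [hm, hcard]
  push_cast
  rw [← Finset.sum_sub_distrib]
  have hterm : ∀ t ∈ T, |((fa (-3 * t ^ 2)).card : ℝ) * ((fb (2 * t ^ 3)).card : ℝ) - (2 * y ^ 4 / p) * (2 * y ^ 6 / p)|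
      ≤ 4 * y ^ 6 / p + 4 * y ^ 4 / p + 4 := by
    intro t _
    have ha := res_count p hp.pos (y ^ 4) (by positivity) (-3 * t ^ 2)
    have hb := res_count p hp.pos (y ^ 6) (by positivity) (2 * t ^ 3)
    change |((fa (-3 * t ^ 2)).card : ℝ) - _| ≤ 2 at ha
    change |((fb (2 * t ^ 3)).card : ℝ) - _| ≤ 2 at hb
    generalize ((fa (-3 * t ^ 2)).card : ℝ) = a at *
    generalize ((fb (2 * t ^ 3)).card : ℝ) = b at *
    have q1 : 4 * y ^ 6 / p = 2 * (2 * y ^ 6 / p) := by ring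
    have q2 : 4 * y ^ 4 / p = 2 * (2 * y ^ 4 / p) := by ring
    rw [q1, q2]
    have r1 : 0 ≤ 2 * y ^ 4 / p := by positivity
    have r2 : 0 ≤ 2 * y ^ 6 / p := by positivity
    generalize 2 * y ^ 4 / p = x at *
    generalize 2 * y ^ 6 / p = z at *
    have : a * b - x * z = (a - x) * z + x * (b - z) + (a - x) * (b - z) := by ring
    rw [this]
    refine (abs_add_three _ _ _).trans ?_
    rw [abs_mul, abs_mul, abs_mul, abs_of_nonneg r1, abs_of_nonneg r2]
    have s1 : |a - x| * z ≤ 2 * z := by gcongr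
    have s2 : x * |b - z| ≤ x * 2 := by gcongr
    have s3 : |a - x| * |b - z| ≤ 2 * 2 := by gcongr
    linarith
  refine (Finset.abs_sum_le_sum_abs _ _).trans ((Finset.sum_le_sum hterm).trans ?_)
  rw [Finset.sum_const, nsmul_eq_mul, hTc]
  have : ((p:ℝ) - 1) / 2 ≤ p / 2 := by linarith
  calc ((p:ℝ) - 1) / 2 * (4 * y ^ 6 / p + 4 * y ^ 4 / p + 4) ≤ p / 2 * (4 * y ^ 6 / p + 4 * y ^ 4 / p + 4) := by gcongr
    _ = _ := by field_simp; ring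

lemma card_boxF' (p : ℕ) (hp : p.Prime) (h5 : 5 ≤ p) (w : ℝ) (hw : 1 ≤ w) (hpw : (p:ℝ) ≤ w ^ 4)
    (d : ℕ) (hd : 0 < d) :
    |((boxF p (w / d)).card : ℝ) - (((p : ℝ) - 1) / (2 * (p : ℝ) ^ 2)) * 4 * (w / d) ^ 10| ≤
      6 * w ^ 6 * (1 / (d:ℝ) ^ 2) := by
  have hd' : (1:ℝ) ≤ d := by exact_mod_cast hd
  have hd0 : (0:ℝ) < d := by linarith
  have hyd : w = (w / d) * d := by field_simp
  have hy0 : 0 < w / d := by positivity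
  rcases lt_or_ge (w / d) 1 with h | h
  · rw [boxF_empty p _ hy0.le h]
    have hp5 : (5:ℝ) ≤ p := by exact_mod_cast h5
    have hc : ((p : ℝ) - 1) / (2 * (p : ℝ) ^ 2) ≤ 1 := by
      rw [div_le_one (by positivity)]; nlinarith
    have hc0 : 0 ≤ ((p : ℝ) - 1) / (2 * (p : ℝ) ^ 2) := by
      apply div_nonneg <;> nlinarith
    simp only [Finset.card_empty, Nat.cast_zero, zero_sub, abs_neg]
    rw [abs_of_nonneg (by positivity)]
    have h10 : (w / d) ^ 10 ≤ (w / d) ^ 2 := pow_le_pow_of_le_one hy0.le h.le (by norm_num)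
    have hw2 : w ^ 2 ≤ w ^ 6 := pow_le_pow_right₀ hw (by norm_num)
    calc _ ≤ 1 * 4 * (w / d) ^ 2 := by gcongr
      _ = 4 * w ^ 2 * (1 / (d:ℝ) ^ 2) := by field_simp
      _ ≤ 6 * w ^ 6 * (1 / (d:ℝ) ^ 2) := by gcongr; norm_num
  · refine (card_boxF p hp h5 _ hy0.le).trans ?_
    have a1 : (w / d) ^ 4 ≤ (w / d) ^ 6 := pow_le_pow_right₀ h (by norm_num)
    have a2 : (w / d) ^ 6 ≤ w ^ 6 * (1 / (d:ℝ) ^ 2) := by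
      rw [div_pow, mul_one_div]
      gcongr
      norm_num
    have a3 : (p:ℝ) ≤ w ^ 6 * (1 / (d:ℝ) ^ 2) := by
      refine hpw.trans ?_
      rw [mul_one_div, le_div_iff₀ (by positivity)]
      have : (d:ℝ) ≤ w := by rw [le_div_iff₀ hd0] at h; linarith
      calc w ^ 4 * (d:ℝ) ^ 2 ≤ w ^ 4 * w ^ 2 := by gcongr
        _ = w ^ 6 := by ring
    linarith

open ArithmeticFunction ArithmeticFunction.Moebius in
lemma moebius_ind_aux (g : ℕ) (hg : 0 < g) : ∑ d ∈ g.divisors, μ d = if g = 1 then 1 else 0 := by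
  rw [← coe_mul_zeta_apply, moebius_mul_coe_zeta, one_apply]

open ArithmeticFunction ArithmeticFunction.Moebius in
open Classical in
lemma moebius_ind (A B : ℤ) (hA : A ≠ 0) (N : ℕ) (hN : ∀ d : ℕ, (d:ℤ) ^ 4 ∣ A → d < N) :
    ∑ d ∈ (Finset.range N).filter (fun d : ℕ => (d:ℤ) ^ 4 ∣ A ∧ (d:ℤ) ^ 6 ∣ B), μ d =
      if CondM A B then 1 else 0 := by
  set D := (Finset.range N).filter (fun d : ℕ => (d:ℤ) ^ 4 ∣ A ∧ (d:ℤ) ^ 6 ∣ B) with hD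
  have mD : ∀ d : ℕ, d ∈ D ↔ (d:ℤ) ^ 4 ∣ A ∧ (d:ℤ) ^ 6 ∣ B := by
    intro d
    simp only [hD, Finset.mem_filter, Finset.mem_range]
    exact ⟨fun h => h.2, fun h => ⟨hN d h.1, h⟩⟩
  have mD' : ∀ d : ℕ, d ∈ D ↔ d ^ 4 ∣ A.natAbs ∧ d ^ 6 ∣ B.natAbs := by
    intro d
    rw [mD, ← Int.natCast_dvd, ← Int.natCast_dvd]; push_cast; rfl
  have h1 : (1:ℕ) ∈ D := by rw [mD]; simp
  set g := D.lcm id with hg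
  have hgD : g ∈ D := by
    rw [hg]
    have : ∀ S : Finset ℕ, S ⊆ D → S.lcm id ∈ D := by
      intro S
      induction S using Finset.induction_on with
      | empty => intro _; simpa using h1
      | insert a s ha ih =>
        intro hs
        rw [Finset.lcm_insert]
        have i1 := ih (fun x hx => hs (Finset.mem_insert_of_mem hx))
        have i2 := hs (Finset.mem_insert_self a s)
        rw [mD'] at i1 i2 ⊢
        change (Nat.lcm a _) ^ 4 ∣ _ ∧ (Nat.lcm a _) ^ 6 ∣ _
        rw [Nat.pow_lcm_pow.symm, Nat.pow_lcm_pow.symm]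
        exact ⟨Nat.lcm_dvd i2.1 i1.1, Nat.lcm_dvd i2.2 i1.2⟩
    exact this D (Finset.Subset.refl _)
  have hg0 : 0 < g := by
    rcases Nat.eq_zero_or_pos g with h | h
    · rw [h, mD] at hgD; simp at hgD; exact absurd hgD.1 hA
    · exact h
  have hDg : D = g.divisors := by
    ext d
    rw [Nat.mem_divisors]
    constructor
    · intro h; exact ⟨Finset.dvd_lcm h, hg0.ne'⟩
    · rintro ⟨h, -⟩
      rw [mD'] at hgD ⊢
      exact ⟨(pow_dvd_pow_of_dvd h 4).trans hgD.1, (pow_dvd_pow_of_dvd h 6).trans hgD.2⟩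
  have hM : CondM A B ↔ g = 1 := by
    constructor
    · intro h
      by_contra hne
      obtain ⟨q, hq, hqg⟩ := Nat.exists_prime_and_dvd hne
      have : q ∈ D := by rw [hDg, Nat.mem_divisors]; exact ⟨hqg, hg0.ne'⟩
      rw [mD] at this
      exact h q hq this.1 this.2
    · intro h q hq h4 h6
      have : q ∈ D := (mD q).2 ⟨h4, h6⟩
      rw [hDg, h] at this
      simp at this
      exact hq.ne_one this
  rw [hDg, moebius_ind_aux g hg0]
  simp only [hM]

open ArithmeticFunction ArithmeticFunction.Moebius in
lemma moebius_abs (d : ℕ) : |(μ d : ℝ)| ≤ 1 := by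
  exact_mod_cast abs_moebius_le_one (n := d)

open ArithmeticFunction ArithmeticFunction.Moebius in
lemma summable_mu : Summable (fun d : ℕ => (μ d : ℝ) / (d:ℝ) ^ 10) := by
  refine Summable.of_norm_bounded (g := fun d : ℕ => 1 / (d:ℝ) ^ 10)
    (Real.summable_one_div_nat_pow.2 (by norm_num)) ?_
  intro d
  rw [norm_div, Real.norm_eq_abs, Real.norm_of_nonneg (by positivity : (0:ℝ) ≤ (d:ℝ) ^ 10)]
  gcongr
  exact moebius_abs d

open ArithmeticFunction ArithmeticFunction.Moebius in
lemma tsum_mu : (∑' d : ℕ, (μ d : ℝ) / (d:ℝ) ^ 10) = 1 / (riemannZeta 10).re := by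
  have hs : (1:ℝ) < (10:ℂ).re := by norm_num
  have h := LSeries_zeta_mul_Lseries_moebius hs
  rw [LSeries_zeta_eq_riemannZeta hs] at h
  have h2 : LSeries (fun n => ((μ n : ℤ) : ℂ)) 10 = ((∑' d : ℕ, (μ d : ℝ) / (d:ℝ) ^ 10 : ℝ) : ℂ) := by
    rw [LSeries, Complex.ofReal_tsum]
    congr 1
    ext d
    rw [LSeries.term_def]
    split_ifs with h
    · simp [h]
    · push_cast
      congr 1
      exact_mod_cast Complex.cpow_natCast (d:ℂ) 10
  rw [h2] at h
  have h3 := congrArg Complex.re h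
  rw [Complex.re_mul_ofReal] at h3
  simp only [Complex.one_re] at h3
  rw [eq_div_iff]
  · linarith
  · intro h0; rw [h0] at h3; simp at h3

open ArithmeticFunction ArithmeticFunction.Moebius in
open Classical in
lemma summable_mu_p (p : ℕ) : Summable (fun d : ℕ => (if p ∣ d then 0 else (μ d : ℝ)) / (d:ℝ) ^ 10) := by
  refine Summable.of_norm_bounded (g := fun d : ℕ => 1 / (d:ℝ) ^ 10)
    (Real.summable_one_div_nat_pow.2 (by norm_num)) ?_
  intro d
  rw [norm_div, Real.norm_eq_abs, Real.norm_of_nonneg (by positivity : (0:ℝ) ≤ (d:ℝ) ^ 10)]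
  gcongr
  split_ifs
  · simp
  · exact moebius_abs d

open ArithmeticFunction ArithmeticFunction.Moebius in
open Classical in
lemma tsum_mu_p (p : ℕ) (hp : p.Prime) :
    (∑' d : ℕ, (if p ∣ d then 0 else (μ d : ℝ)) / (d:ℝ) ^ 10) =
      (p : ℝ) ^ 10 / ((p : ℝ) ^ 10 - 1) * (1 / (riemannZeta 10).re) := by
  set f : ℕ → ℝ := fun d => (if p ∣ d then 0 else (μ d : ℝ)) / (d:ℝ) ^ 10 with hf
  set g : ℕ → ℝ := fun d => (if p ∣ d then (μ d : ℝ) else 0) / (d:ℝ) ^ 10 with hg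
  have hfg : ∀ d, (μ d : ℝ) / (d:ℝ) ^ 10 = f d + g d := by
    intro d; simp only [hf, hg]; split_ifs <;> simp
  have sf : Summable f := summable_mu_p p
  have sg : Summable g := by
    have : g = fun d => (μ d : ℝ) / (d:ℝ) ^ 10 - f d := by ext d; rw [hfg]; ring
    rw [this]; exact summable_mu.sub sf
  have hinj : Function.Injective (fun e : ℕ => p * e) := fun a b h => Nat.eq_of_mul_eq_mul_left hp.pos h
  have hgsum : ∑' d, g d = ∑' e, g (p * e) := by
    symm
    apply hinj.tsum_eq
    intro d hd
    by_contra hnd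
    apply hd
    have : ¬ p ∣ d := by rintro ⟨e, rfl⟩; exact hnd ⟨e, rfl⟩
    simp [hg, this]
  have hge : ∀ e, g (p * e) = - (1 / (p:ℝ) ^ 10) * f e := by
    intro e
    simp only [hf, hg, dvd_mul_right, if_true]
    by_cases h : p ∣ e
    · rw [if_pos h, moebius_eq_zero_of_not_squarefree]
      · simp
      · intro hs
        have := hs p (mul_dvd_mul_left p h)
        exact hp.one_lt.ne' (Nat.isUnit_iff.1 this)
    · rw [if_neg h, isMultiplicative_moebius.map_mul_of_coprime ((Nat.Prime.coprime_iff_not_dvd hp).2 h),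
        moebius_apply_prime hp]
      push_cast
      rw [mul_pow]
      field_simp
  have hz := tsum_mu
  simp_rw [hfg] at hz
  rw [sf.tsum_add sg, hgsum] at hz
  simp_rw [hge] at hz
  rw [tsum_mul_left] at hz
  rw [← hz]
  have hp1 : (1:ℝ) < (p:ℝ) ^ 10 := one_lt_pow₀ (by exact_mod_cast hp.one_lt) (by norm_num)
  have : (p:ℝ) ^ 10 - 1 ≠ 0 := by linarith
  have hp0 : (p:ℝ) ≠ 0 := by exact_mod_cast hp.ne_zero
  field_simp
  ring

open ArithmeticFunction ArithmeticFunction.Moebius in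
open Classical in
lemma fiber_card (p : ℕ) (hp : p.Prime) (h5 : 5 ≤ p) (w : ℝ) (d : ℕ) (hd : ¬ p ∣ d) :
    ((boxF p w).filter (fun AB => (d:ℤ) ^ 4 ∣ AB.1 ∧ (d:ℤ) ^ 6 ∣ AB.2)).card =
      (boxF p (w / d)).card := by
  have hd0 : d ≠ 0 := by rintro rfl; exact hd (dvd_zero _)
  have hdR : (0:ℝ) < d := by exact_mod_cast Nat.pos_of_ne_zero hd0
  have hdZ : (d:ℤ) ≠ 0 := by exact_mod_cast hd0
  have key : ∀ A B : ℤ, ((d:ℤ) ^ 4 * A, (d:ℤ) ^ 6 * B) ∈ boxF p w ↔ (A, B) ∈ boxF p (w / d) := by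
    intro A B
    rw [mem_boxF, mem_boxF, Gc_scale p hp h5 d hd]
    push_cast
    rw [abs_mul, abs_mul, abs_of_pos (pow_pos hdR 4), abs_of_pos (pow_pos hdR 6), div_pow, div_pow,
      le_div_iff₀' (pow_pos hdR 4), le_div_iff₀' (pow_pos hdR 6)]
  symm
  apply Finset.card_bij (fun AB _ => ((d:ℤ) ^ 4 * AB.1, (d:ℤ) ^ 6 * AB.2))
  · rintro ⟨A, B⟩ h
    rw [Finset.mem_filter]
    exact ⟨(key A B).2 h, dvd_mul_right _ _, dvd_mul_right _ _⟩
  · rintro ⟨A, B⟩ _ ⟨A', B'⟩ _ h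
    rw [Prod.mk.injEq] at h ⊢
    exact ⟨mul_left_cancel₀ (pow_ne_zero 4 hdZ) h.1, mul_left_cancel₀ (pow_ne_zero 6 hdZ) h.2⟩
  · rintro ⟨A, B⟩ h
    rw [Finset.mem_filter] at h
    obtain ⟨h, ⟨A', hA⟩, ⟨B', hB⟩⟩ := h
    simp only at hA hB
    subst hA hB
    exact ⟨(A', B'), (key A' B').1 h, rfl⟩

open ArithmeticFunction ArithmeticFunction.Moebius in
open Classical in
lemma card_P (p : ℕ) (hp : p.Prime) (h5 : 5 ≤ p) (w : ℝ) (hw : 1 ≤ w) :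
    (((boxF p w).filter (fun AB => CondM AB.1 AB.2)).card : ℝ) =
      ∑ d ∈ Finset.range (⌊w⌋₊ + 1), (if p ∣ d then 0 else (μ d : ℝ)) * ((boxF p (w / d)).card : ℝ) := by
  have h1 : (((boxF p w).filter (fun AB => CondM AB.1 AB.2)).card : ℤ) =
      ∑ d ∈ Finset.range (⌊w⌋₊ + 1), (if p ∣ d then 0 else μ d) * ((boxF p (w / d)).card : ℤ) := by
    rw [Finset.card_filter]
    push_cast
    have e1 : ∀ AB ∈ boxF p w, (if CondM AB.1 AB.2 then (1:ℤ) else 0) =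
        ∑ d ∈ Finset.range (⌊w⌋₊ + 1), if (d:ℤ) ^ 4 ∣ AB.1 ∧ (d:ℤ) ^ 6 ∣ AB.2 then μ d else 0 := by
      rintro ⟨A, B⟩ h
      rw [mem_boxF] at h
      have hA : A ≠ 0 := by rintro rfl; exact h.2.2.2.1 (dvd_zero _)
      rw [← Finset.sum_filter, moebius_ind A B hA]
      intro d hd
      have h2 : (d:ℤ) ^ 4 ≤ |A| := Int.le_of_dvd (abs_pos.2 hA) ((dvd_abs _ _).2 hd)
      have h3 : (d:ℝ) ^ 4 ≤ |(A:ℝ)| := by exact_mod_cast h2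
      have h4 : (d:ℝ) ≤ w := le_of_pow_le_pow_left₀ (by norm_num) (by linarith) (h3.trans h.1)
      exact Nat.lt_succ_of_le (Nat.le_floor h4)
    rw [Finset.sum_congr rfl e1, Finset.sum_comm]
    apply Finset.sum_congr rfl
    intro d _
    rw [← Finset.sum_filter, Finset.sum_const, nsmul_eq_mul]
    by_cases hd : p ∣ d
    · rw [if_pos hd, zero_mul, Finset.filter_eq_empty_iff.2]
      · simp
      · rintro ⟨A, B⟩ h ⟨h4, -⟩
        rw [mem_boxF] at h
        refine h.2.2.2.1 (dvd_trans ?_ h4)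
        exact dvd_pow (by exact_mod_cast hd) (by norm_num)
    · rw [if_neg hd, fiber_card p hp h5 w d hd, mul_comm]
  have h2 := congrArg (fun z : ℤ => (z:ℝ)) h1
  push_cast at h2
  exact h2

open ArithmeticFunction ArithmeticFunction.Moebius in
open Classical in
lemma card_P_bound (p : ℕ) (hp : p.Prime) (h5 : 5 ≤ p) (w : ℝ) (hw : 1 ≤ w) (hpw : (p:ℝ) ≤ w ^ 4) :
    |(((boxF p w).filter (fun AB => CondM AB.1 AB.2)).card : ℝ) -
      (((p : ℝ) - 1) / (2 * (p : ℝ) ^ 2)) * ((p : ℝ) ^ 10 / ((p : ℝ) ^ 10 - 1))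
            * (4 / (riemannZeta 10).re) * w ^ 10| ≤ 6 * w ^ 6 * ∑' d : ℕ, 1 / (d:ℝ) ^ 2 := by
  set c : ℝ := ((p : ℝ) - 1) / (2 * (p : ℝ) ^ 2) with hc
  set m : ℕ → ℝ := fun d => if p ∣ d then 0 else (μ d : ℝ) with hm
  set F : ℕ → ℝ := fun d => m d * ((boxF p (w / d)).card : ℝ) with hF
  have hF0 : ∀ d ∉ Finset.range (⌊w⌋₊ + 1), F d = 0 := by
    intro d hd
    simp only [Finset.mem_range, not_lt] at hd
    have hwd : w < d := (Nat.floor_lt (by linarith)).1 hd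
    have hd0 : (0:ℝ) < d := by linarith
    simp only [hF]
    rw [boxF_empty p (w / d) (by positivity) (by rwa [div_lt_one hd0])]
    simp
  have hFsum : HasSum F (((boxF p w).filter (fun AB => CondM AB.1 AB.2)).card : ℝ) := by
    rw [card_P p hp h5 w hw]
    exact hasSum_sum_of_ne_finset_zero hF0
  have hG : HasSum (fun d => c * 4 * w ^ 10 * (m d / (d:ℝ) ^ 10))
      (c * 4 * w ^ 10 * ((p : ℝ) ^ 10 / ((p : ℝ) ^ 10 - 1) * (1 / (riemannZeta 10).re))) := by
    apply HasSum.mul_left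
    rw [← tsum_mu_p p hp]
    exact (summable_mu_p p).hasSum
  have hE := hFsum.sub hG
  have hK : Summable (fun d : ℕ => 1 / (d:ℝ) ^ 2) := Real.summable_one_div_nat_pow.2 (by norm_num)
  have hb := tsum_of_norm_bounded (hK.hasSum.mul_left (6 * w ^ 6)) (f := fun d => F d - c * 4 * w ^ 10 * (m d / (d:ℝ) ^ 10)) ?_
  · rw [hE.tsum_eq, Real.norm_eq_abs] at hb
    convert hb using 3
    ring
  · intro d
    by_cases hd : p ∣ d
    · simp only [hF, hm, if_pos hd]
      simp
      positivity
    · have hd0 : 0 < d := by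
        rcases Nat.eq_zero_or_pos d with rfl | h
        · exact absurd (dvd_zero _) hd
        · exact h
      have e : F d - c * 4 * w ^ 10 * (m d / (d:ℝ) ^ 10) =
          μ d * (((boxF p (w / d)).card : ℝ) - c * 4 * (w / d) ^ 10) := by
        simp only [hF, hm, if_neg hd, div_pow]; ring
      rw [e, norm_mul, Real.norm_eq_abs, Real.norm_eq_abs]
      calc _ ≤ 1 * (6 * w ^ 6 * (1 / (d:ℝ) ^ 2)) := by
            gcongr
            · exact moebius_abs d
            · exact card_boxF' p hp h5 w hw hpw d hd0
        _ = _ := one_mul _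

open Classical in
lemma card_sing (S : Finset (ℤ × ℤ)) (w : ℝ) (hw : 1 ≤ w)
    (hS : ∀ AB ∈ S, |(AB.2:ℝ)| ≤ w ^ 6 ∧ 4 * AB.1 ^ 3 + 27 * AB.2 ^ 2 = 0) :
    (S.card : ℝ) ≤ 3 * w ^ 6 := by
  have h1 : S.card ≤ (Finset.Icc (-⌊w ^ 6⌋) ⌊w ^ 6⌋).card := by
    apply Finset.card_le_card_of_injOn Prod.snd
    · rintro ⟨A, B⟩ h
      obtain ⟨h1, -⟩ := hS _ h
      rw [abs_le] at h1
      have a1 : B ≤ ⌊w ^ 6⌋ := Int.le_floor.2 h1.2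
      have a2 : -B ≤ ⌊w ^ 6⌋ := Int.le_floor.2 (by push_cast; linarith [h1.1])
      simp only [Finset.coe_Icc, Set.mem_Icc]
      exact ⟨by linarith, a1⟩
    · rintro ⟨A, B⟩ h ⟨A', B'⟩ h' hB
      obtain ⟨-, e1⟩ := hS _ h
      obtain ⟨-, e2⟩ := hS _ h'
      simp only at hB e1 e2
      subst hB
      have : A ^ 3 = A' ^ 3 := by linarith
      have : A = A' := (Odd.strictMono_pow (by decide : Odd 3)).injective this
      rw [this]
  have h0 : (0:ℤ) ≤ ⌊w ^ 6⌋ := Int.floor_nonneg.2 (by positivity)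
  have h2 : ((Finset.Icc (-⌊w ^ 6⌋) ⌊w ^ 6⌋).card : ℤ) = 2 * ⌊w ^ 6⌋ + 1 := by
    rw [Int.card_Icc, Int.toNat_of_nonneg (by linarith)]; ring
  have h3 : ((Finset.Icc (-⌊w ^ 6⌋) ⌊w ^ 6⌋).card : ℝ) = 2 * ⌊w ^ 6⌋ + 1 := by exact_mod_cast h2
  have h4 := Int.floor_le (w ^ 6)
  have h5 : (1:ℝ) ≤ w ^ 6 := one_le_pow₀ hw
  have h6 : (S.card : ℝ) ≤ ((Finset.Icc (-⌊w ^ 6⌋) ⌊w ^ 6⌋).card : ℝ) := by exact_mod_cast h1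
  linarith

theorem stmt_15 :
    ∃ K : ℝ, 0 < K ∧ ∀ (p : ℕ), p.Prime → 5 ≤ p → ∀ (X : ℝ), (p : ℝ) ^ 3 ≤ X →
      |({AB ∈ Efam X | (p : ℤ) ∣ (4 * AB.1 ^ 3 + 27 * AB.2 ^ 2) ∧ ¬ (p : ℤ) ∣ AB.1 ∧
            ((-18 * AB.1 * AB.2 : ℤ) : ZMod p) ≠ 0 ∧
            IsSquare ((-18 * AB.1 * AB.2 : ℤ) : ZMod p)}.ncard : ℝ)
          - (((p : ℝ) - 1) / (2 * (p : ℝ) ^ 2)) * ((p : ℝ) ^ 10 / ((p : ℝ) ^ 10 - 1))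
            * (4 / (riemannZeta 10).re) * X ^ ((5 : ℝ) / 6)|
        ≤ K * X ^ ((1 : ℝ) / 2) := by
  
  classical
  have hK0 : (0:ℝ) ≤ ∑' d : ℕ, 1 / (d:ℝ) ^ 2 := tsum_nonneg (fun d => by positivity)
  refine ⟨6 * (∑' d : ℕ, 1 / (d:ℝ) ^ 2) + 3, by positivity, ?_⟩
  intro p hp h5 X hX
  have hp5 : (5:ℝ) ≤ p := by exact_mod_cast h5
  have hp3 : (1:ℝ) ≤ (p:ℝ) ^ 3 := one_le_pow₀ (by linarith)
  have hX1 : 1 ≤ X := hp3.trans hX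
  have hX0 : 0 ≤ X := by linarith
  set w : ℝ := X ^ ((1:ℝ) / 12) with hwdef
  have hw : 1 ≤ w := Real.one_le_rpow hX1 (by norm_num)
  have hw0 : 0 ≤ w := by linarith
  have hwpow : ∀ n : ℕ, w ^ n = X ^ ((n:ℝ) / 12) := by
    intro n
    rw [hwdef, ← Real.rpow_natCast, ← Real.rpow_mul hX0]; congr 1; ring
  have hw12 : w ^ 12 = X := by rw [hwpow]; norm_num
  have hw10 : X ^ ((5:ℝ) / 6) = w ^ 10 := by rw [hwpow]; norm_num
  have hw6 : X ^ ((1:ℝ) / 2) = w ^ 6 := by rw [hwpow]; norm_num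
  have hpw : (p:ℝ) ≤ w ^ 4 := by
    apply le_of_pow_le_pow_left₀ (n := 3) (by norm_num) (by positivity)
    calc (p:ℝ) ^ 3 ≤ X := hX
      _ = (w ^ 4) ^ 3 := by rw [← hw12]; ring
  rw [hw10, hw6]
  set P := (boxF p w).filter (fun AB => CondM AB.1 AB.2) with hP
  have hset : {AB ∈ Efam X | (p : ℤ) ∣ (4 * AB.1 ^ 3 + 27 * AB.2 ^ 2) ∧ ¬ (p : ℤ) ∣ AB.1 ∧
            ((-18 * AB.1 * AB.2 : ℤ) : ZMod p) ≠ 0 ∧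
            IsSquare ((-18 * AB.1 * AB.2 : ℤ) : ZMod p)} =
      ↑(P.filter (fun AB => ¬ 4 * AB.1 ^ 3 + 27 * AB.2 ^ 2 = 0)) := by
    ext ⟨A, B⟩
    rw [Finset.mem_coe, Finset.mem_filter, hP, Finset.mem_filter, mem_boxF]
    have hh : ((max (|A| ^ 3) (B ^ 2) : ℤ) : ℝ) ≤ X ↔ |(A:ℝ)| ≤ w ^ 4 ∧ |(B:ℝ)| ≤ w ^ 6 := by
      push_cast
      rw [max_le_iff]
      apply and_congr
      · rw [← hw12, show w ^ 12 = (w ^ 4) ^ 3 by ring]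
        exact pow_le_pow_iff_left₀ (abs_nonneg _) (by positivity) (by norm_num)
      · rw [← hw12, show w ^ 12 = (w ^ 6) ^ 2 by ring, ← sq_abs (B:ℝ)]
        exact pow_le_pow_iff_left₀ (abs_nonneg _) (by positivity) (by norm_num)
    change ((4 * A ^ 3 + 27 * B ^ 2 ≠ 0 ∧ ((max (|A| ^ 3) (B ^ 2) : ℤ) : ℝ) ≤ X ∧ CondM A B) ∧
      Gc p A B) ↔ _
    rw [hh]
    tauto
  rw [hset, Set.ncard_coe_finset]
  have hsplit := Finset.card_filter_add_card_filter_not (s := P) (fun AB => 4 * AB.1 ^ 3 + 27 * AB.2 ^ 2 = 0)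
  have hs := card_sing (P.filter (fun AB => 4 * AB.1 ^ 3 + 27 * AB.2 ^ 2 = 0)) w hw (by
    rintro ⟨A, B⟩ h
    rw [Finset.mem_filter, hP, Finset.mem_filter, mem_boxF] at h
    exact ⟨h.1.1.2.1, h.2⟩)
  have hb := card_P_bound p hp h5 w hw hpw
  rw [← hP] at hb
  have hsplit' : ((P.filter (fun AB => 4 * AB.1 ^ 3 + 27 * AB.2 ^ 2 = 0)).card : ℝ) +
      ((P.filter (fun AB => ¬ 4 * AB.1 ^ 3 + 27 * AB.2 ^ 2 = 0)).card : ℝ) = (P.card : ℝ) := by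
    exact_mod_cast hsplit
  have hn : (0:ℝ) ≤ ((P.filter (fun AB => 4 * AB.1 ^ 3 + 27 * AB.2 ^ 2 = 0)).card : ℝ) := Nat.cast_nonneg _
  rw [abs_le] at hb ⊢
  have h6 : (0:ℝ) ≤ w ^ 6 := by positivity
  constructor <;> nlinarith [hb.1, hb.2]
end
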